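/- Let d ≥ 1 and let S = {s_1 < s_2 < ⋯ < s_k} ⊆ {0,1,…,d}. The number of edges of Δ(d,S) equals Σ_{i=1}^{k−1} binom(d−s_i, s_{i+1}−s_i)·binom(d, s_i) + Σ_j (s_j(d−s_j)/2)·binom(d, s_j), where the second sum ranges over all 1 ≤ j ≤ k such that {s_j − 1, s_j + 1} ⊄ S. -/

import Mathlib

/-!
Every edge of `Δ(d,S)` joins two of its defining 0/1-vectors `e_A`, `e_B`, since the endpoints of an
extreme segment are extreme points. The edges (`edge_iff`) are of two kinds.

* `A ⊂ B`, with no element of `S` strictly between `|A|` and `|B|`. Such a segment is the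
  intersection of `Δ(d,S)` with the face of the cube spanned by the interval `[A, B]`
  (`isExtreme_of_subset`). If some `t ∈ S` lies strictly between, then the average of all `e_C` with
  `A ⊆ C ⊆ B`, `|C| = t` lies on the segment, which is then no face (`not_isExtreme_of_between`).
* `A = C ∪ {a}`, `B = C ∪ {b}`, unless both `|C|` and `|C| + 2` lie in `S`. The interval
  `[C, C ∪ {a, b}]` spans a square face of the cube, and the segment is a diagonal of this square;
  it is an edge exactly when the square has lost one of its other two vertices
  (`isExtreme_of_exchange`).

For any other pair, exchanging one element of `A \ B` with one of `B \ A` gives a second pair of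
vertices with the same midpoint, so the segment is not a face (`eq_of_exchange`).

Edges of the first kind correspond to flags `A ⊂ B` with consecutive sizes in `S`, those of the
second kind to flags `C ⊂ D` with `|C| = s_j - 1` and `|D| = s_j + 1`; the edge belonging to
`C ⊂ D` is spanned by the open interval between `C` and `D`. Both are counted by `card_flagPairs`,
and `s (d - s) binom(d, s) / 2 = binom(d, s - 1) binom(d - s + 1, 2)`.
-/

open Set Pointwise

noncomputable section

/-- The 0/1 indicator vector of a subset `A ⊆ [d]`. -/
def eVec (d : ℕ) (A : Finset (Fin d)) : Fin d → ℝ := fun i => if i ∈ A then 1 else 0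

/-- The `S`-hypersimplex `Δ(d,S)`: the convex hull of all 0/1-vectors whose
coordinate sum lies in `S`. -/
def Shyp (d : ℕ) (S : Finset ℕ) : Set (Fin d → ℝ) :=
  convexHull ℝ {x | ∃ A : Finset (Fin d), A.card ∈ S ∧ x = eVec d A}

/-- The face of `P` in direction `c`. -/
def faceDir (d : ℕ) (P : Set (Fin d → ℝ)) (c : Fin d → ℝ) : Set (Fin d → ℝ) :=
  {x ∈ P | ∀ y ∈ P, ∑ i, c i * y i ≤ ∑ i, c i * x i}

/-- The even halfcube `H_d`. -/
def halfcube (d : ℕ) : Set (Fin d → ℝ) :=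
  Shyp d ((Finset.range (d + 1)).filter (fun s => Even s))

/-- The permutahedron `Π(p)`. -/
def permPoly (d : ℕ) (p : Fin d → ℝ) : Set (Fin d → ℝ) :=
  convexHull ℝ {x | ∃ σ : Equiv.Perm (Fin d), x = fun i => p (σ i)}

/-! ### 0/1-vectors and faces of convex hulls -/

theorem eVec_injective (d : ℕ) : Function.Injective (eVec d) := by
  intro A B h
  ext i
  have := congrFun h i
  by_cases hA : i ∈ A <;> by_cases hB : i ∈ B <;> simp_all [eVec]

/-- The only 0/1-vectors on the segment between two 0/1-vectors are its endpoints. -/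
theorem eVec_mem_segment {d : ℕ} {A B X : Finset (Fin d)}
    (h : eVec d X ∈ segment ℝ (eVec d A) (eVec d B)) : X = A ∨ X = B := by
  by_cases hAB : A = B
  · subst hAB
    rw [segment_same, mem_singleton_iff] at h
    exact Or.inl (eVec_injective d h)
  obtain ⟨i, hi⟩ : ∃ i, ¬(i ∈ A ↔ i ∈ B) := by
    by_contra! hc
    exact hAB (Finset.ext hc)
  obtain ⟨a, b, ha, hb, hab, h⟩ := h
  have hb' : b = 1 - a := by linarith
  subst hb'
  have hi' := congrFun h i
  have key : a = 0 ∨ a = 1 := by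
    by_cases hA : i ∈ A <;> by_cases hB : i ∈ B <;> by_cases hX : i ∈ X <;>
      simp [eVec, hA, hB, hX] at hi hi'
    all_goals first
      | (left; linarith)
      | (right; linarith)
  rcases key with rfl | rfl
  · right; apply eVec_injective d; rw [← h]; simp
  · left; apply eVec_injective d; rw [← h]; simp

theorem convexHull_eVec_pair {d : ℕ} (A B : Finset (Fin d)) :
    convexHull ℝ (eVec d '' {A, B}) = segment ℝ (eVec d A) (eVec d B) := by
  rw [image_pair, convexHull_pair]

/-- The points of `V` where a linear functional attains its maximum over `V` span an extreme
subset (a face) of the convex hull of `V`. -/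
theorem isExtreme_convexHull_of_max {E : Type*} [AddCommGroup E] [Module ℝ E] {V F : Set E}
    (l : E →ₗ[ℝ] ℝ) (m : ℝ) (hFV : F ⊆ V) (hle : ∀ x ∈ V, l x ≤ m)
    (hV : ∀ x ∈ V, l x = m → x ∈ F) (hF : ∀ x ∈ F, l x = m) :
    IsExtreme ℝ (convexHull ℝ V) (convexHull ℝ F) := by
  have hFm : ∀ x ∈ convexHull ℝ F, l x = m := by
    intro x hx
    have hc : Convex ℝ {x | l x = m} := convex_hyperplane l.isLinear m
    exact convexHull_min hF hc hx
  have hT : Convex ℝ ({x | l x < m} ∪ convexHull ℝ F) := by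
    rw [convex_iff_forall_pos]
    intro x hx y hy a b ha hb hab
    have hlx : l x ≤ m := hx.elim (fun h => le_of_lt h) (fun h => (hFm x h).le)
    have hly : l y ≤ m := hy.elim (fun h => le_of_lt h) (fun h => (hFm y h).le)
    have hb' : b = 1 - a := by linarith
    rcases hx with hx | hx
    · left
      have hx' : l x < m := hx
      simp only [mem_ofPred_eq, map_add, map_smul, smul_eq_mul]
      subst hb'
      nlinarith
    rcases hy with hy | hy
    · left
      have hy' : l y < m := hy
      simp only [mem_ofPred_eq, map_add, map_smul, smul_eq_mul]
      subst hb'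
      nlinarith
    · right
      exact convex_convexHull ℝ F hx hy ha.le hb.le hab
  have hsub : convexHull ℝ V ⊆ {x | l x < m} ∪ convexHull ℝ F := by
    apply convexHull_min _ hT
    intro x hx
    rcases (hle x hx).lt_or_eq with h | h
    · exact Or.inl h
    · exact Or.inr (subset_convexHull ℝ F (hV x hx h))
  refine ⟨convexHull_mono hFV, ?_⟩
  rintro x hx y hy z hz ⟨a, b, ha, hb, hab, rfl⟩
  have hz' := hFm _ hz
  simp only [map_add, map_smul, smul_eq_mul] at hz'
  rcases hsub hx with h | h
  · exfalso
    have h' : l x < m := h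
    have hly : l y ≤ m := (hsub hy).elim (fun h => le_of_lt h) (fun h => (hFm y h).le)
    have hb' : b = 1 - a := by linarith
    subst hb'
    nlinarith
  · exact h

/-- The intersection of `Δ(d,S)` with the face `{x | x = 1 on C, x = 0 off D}` of the cube. -/
theorem isExtreme_Shyp_interval {d : ℕ} (S : Finset ℕ) (C D : Finset (Fin d)) :
    IsExtreme ℝ (Shyp d S)
      (convexHull ℝ {x | ∃ X : Finset (Fin d), X.card ∈ S ∧ C ⊆ X ∧ X ⊆ D ∧ x = eVec d X}) := by
  let l : (Fin d → ℝ) →ₗ[ℝ] ℝ :=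
    ∑ i ∈ C, LinearMap.proj i - ∑ i ∈ Dᶜ, LinearMap.proj i
  have hl : ∀ X : Finset (Fin d), l (eVec d X) = ((C ∩ X).card : ℝ) - ((Dᶜ ∩ X).card : ℝ) := by
    intro X
    simp [l, eVec, LinearMap.sum_apply]
  have hle : ∀ X : Finset (Fin d), ((C ∩ X).card : ℝ) ≤ C.card := fun X => by
    exact_mod_cast Finset.card_le_card Finset.inter_subset_left
  have hge : ∀ X : Finset (Fin d), (0 : ℝ) ≤ (Dᶜ ∩ X).card := fun X => by positivity
  refine isExtreme_convexHull_of_max l C.card ?_ ?_ ?_ ?_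
  · rintro x ⟨X, hX, -, -, rfl⟩
    exact ⟨X, hX, rfl⟩
  · rintro x ⟨X, hX, rfl⟩
    rw [hl]
    linarith [hle X, hge X]
  · rintro x ⟨X, hX, rfl⟩ h
    rw [hl] at h
    have h1 : ((C ∩ X).card : ℝ) = C.card := by linarith [hle X, hge X]
    have h2 : ((Dᶜ ∩ X).card : ℝ) = 0 := by linarith [hle X, hge X]
    refine ⟨X, hX, ?_, ?_, rfl⟩
    · rw [← Finset.inter_eq_left]
      exact Finset.eq_of_subset_of_card_le Finset.inter_subset_left (by exact_mod_cast h1.ge)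
    · have h3 : Dᶜ ∩ X = ∅ := by simpa using h2
      intro i hi
      by_contra hD
      have : i ∈ Dᶜ ∩ X := by simp [hi, hD]
      simp [h3] at this
  · rintro x ⟨X, hX, hCX, hXD, rfl⟩
    rw [hl, Finset.inter_eq_left.2 hCX]
    have : Dᶜ ∩ X = ∅ := by
      ext i
      simp only [Finset.mem_inter, Finset.mem_compl, Finset.notMem_empty, iff_false]
      exact fun h => h.1 (hXD h.2)
    simp [this]

/-! ### Classification of the edges -/

/-- The pair `{A, B}` spans an edge when `A ⊂ B` have consecutive sizes in `S`. -/
theorem isExtreme_of_subset {d : ℕ} {S : Finset ℕ} {A B : Finset (Fin d)} (hAB : A ⊆ B)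
    (hA : A.card ∈ S) (hB : B.card ∈ S) (hS : ∀ t ∈ S, A.card < t → ¬ t < B.card) :
    IsExtreme ℝ (Shyp d S) (segment ℝ (eVec d A) (eVec d B)) := by
  have h := isExtreme_Shyp_interval S A B
  rw [← convexHull_pair]
  convert h using 2
  ext x
  simp only [mem_insert_iff, mem_singleton_iff, mem_ofPred_eq]
  constructor
  · rintro (rfl | rfl)
    · exact ⟨A, hA, subset_rfl, hAB, rfl⟩
    · exact ⟨B, hB, hAB, subset_rfl, rfl⟩
  · rintro ⟨X, hX, h1, h2, rfl⟩
    by_cases hXA : A = X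
    · left; rw [hXA]
    by_cases hXB : X = B
    · right; rw [hXB]
    exact absurd (Finset.card_lt_card (h2.ssubset_of_ne hXB))
      (hS _ hX (Finset.card_lt_card (h1.ssubset_of_ne hXA)))

theorem Ioo_eq_pair {d : ℕ} {C : Finset (Fin d)} {a b : Fin d} (ha : a ∉ C) (hb : b ∉ C)
    (hab : a ≠ b) :
    Finset.Ioo C (insert a (insert b C)) = {insert a C, insert b C} := by
  ext X
  simp only [Finset.mem_Ioo, Finset.mem_insert, Finset.mem_singleton]
  constructor
  · rintro ⟨h1, h2⟩
    have h1' := h1.subset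
    have h2' := h2.subset
    obtain ⟨x, hx, hxC⟩ := Finset.exists_of_ssubset h1
    obtain ⟨y, hy, hyX⟩ := Finset.exists_of_ssubset h2
    have := h2' hx
    simp only [Finset.mem_insert] at this hy
    by_cases haX : a ∈ X
    · left
      ext i
      have := @h1' i
      have := @h2' i
      grind
    · right
      ext i
      have := @h1' i
      have := @h2' i
      grind
  · rintro (rfl | rfl)
    · refine ⟨Finset.ssubset_insert ha, ?_⟩
      rw [Finset.insert_comm]
      exact Finset.ssubset_insert (by simp [hab.symm, hb])
    · exact ⟨Finset.ssubset_insert hb, Finset.ssubset_insert (by simp [hab, ha])⟩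

/-- The pair `{C ∪ {a}, C ∪ {b}}` spans an edge unless both `C` and `C ∪ {a, b}` are vertices. -/
theorem isExtreme_of_exchange {d : ℕ} {S : Finset ℕ} {C : Finset (Fin d)} {a b : Fin d}
    (ha : a ∉ C) (hb : b ∉ C) (hab : a ≠ b) (h1 : C.card + 1 ∈ S)
    (hS : ¬(C.card ∈ S ∧ C.card + 2 ∈ S)) :
    IsExtreme ℝ (Shyp d S) (segment ℝ (eVec d (insert a C)) (eVec d (insert b C))) := by
  refine (isExtreme_Shyp_interval S C (insert a (insert b C))).trans ?_
  rw [← convexHull_pair]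
  have hcD : (insert a (insert b C)).card = C.card + 2 := by
    rw [Finset.card_insert_of_notMem (by simp [hab, ha]), Finset.card_insert_of_notMem hb]
  have hX : ∀ X, C ⊆ X → X ⊆ insert a (insert b C) → X = C ∨ X = insert a (insert b C) ∨
      X = insert a C ∨ X = insert b C := by
    intro X h1 h2
    by_cases hXC : C = X
    · simp [hXC]
    by_cases hXD : X = insert a (insert b C)
    · simp [hXD]
    have : X ∈ Finset.Ioo C (insert a (insert b C)) := by
      rw [Finset.mem_Ioo]
      exact ⟨h1.ssubset_of_ne hXC, h2.ssubset_of_ne hXD⟩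
    rw [Ioo_eq_pair ha hb hab] at this
    simpa using Or.inr (Or.inr (by simpa using this))
  -- The functional `±(x a + x b)` cuts the edge out of the triangle (or edge) in question.
  obtain ⟨ε, h0, h2⟩ : ∃ ε : ℝ, (C.card ∈ S → 0 < ε) ∧ (C.card + 2 ∈ S → ε < 0) := by
    by_cases h : C.card ∈ S
    · exact ⟨1, fun _ => by norm_num, fun h' => absurd ⟨h, h'⟩ hS⟩
    · exact ⟨-1, fun h' => absurd h' h, fun _ => by norm_num⟩
  let l : (Fin d → ℝ) →ₗ[ℝ] ℝ := ε • ((LinearMap.proj a : (Fin d → ℝ) →ₗ[ℝ] ℝ) + LinearMap.proj b)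
  have hl : ∀ x, l x = ε * (x a + x b) := fun x => by simp [l]; ring
  have lA : l (eVec d (insert a C)) = ε := by rw [hl]; simp [eVec, hab.symm, hb]
  have lB : l (eVec d (insert b C)) = ε := by rw [hl]; simp [eVec, hab, ha]
  have lC : l (eVec d C) = 0 := by rw [hl]; simp [eVec, ha, hb]
  have lD : l (eVec d (insert a (insert b C))) = ε * 2 := by
    rw [hl]; simp [eVec]; norm_num
  refine isExtreme_convexHull_of_max l ε ?_ ?_ ?_ ?_
  · rintro x (rfl | rfl)
    · refine ⟨insert a C, ?_, Finset.subset_insert _ _, ?_, rfl⟩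
      · rwa [Finset.card_insert_of_notMem ha]
      · exact Finset.insert_subset_insert _ (Finset.subset_insert _ _)
    · refine ⟨insert b C, ?_, Finset.subset_insert _ _, Finset.subset_insert _ _, rfl⟩
      rwa [Finset.card_insert_of_notMem hb]
  · rintro x ⟨X, hXS, hCX, hXD, rfl⟩
    rcases hX X hCX hXD with rfl | rfl | rfl | rfl
    · rw [lC]; linarith [h0 hXS]
    · rw [lD]; linarith [h2 (hcD ▸ hXS)]
    · exact lA.le
    · exact lB.le
  · rintro x ⟨X, hXS, hCX, hXD, rfl⟩ h
    rcases hX X hCX hXD with rfl | rfl | rfl | rfl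
    · rw [lC] at h; linarith [h0 hXS]
    · rw [lD] at h; linarith [h2 (hcD ▸ hXS)]
    · exact Or.inl rfl
    · exact Or.inr rfl
  · rintro x (rfl | rfl)
    · exact lA
    · exact lB

/-- If `[e_A, e_B]` is a face and `e_X + e_Y = e_A + e_B` for vertices `e_X`, `e_Y`, then `e_X` is
one of the endpoints, since the two segments share their midpoint. -/
theorem eq_of_exchange {d : ℕ} {S : Finset ℕ} {A B X Y : Finset (Fin d)}
    (hE : IsExtreme ℝ (Shyp d S) (segment ℝ (eVec d A) (eVec d B)))
    (hX : X.card ∈ S) (hY : Y.card ∈ S) (hi : X ∩ Y = A ∩ B) (hu : X ∪ Y = A ∪ B) :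
    X = A ∨ X = B := by
  apply eVec_mem_segment
  have hz : (1 / 2 : ℝ) • eVec d A + (1 / 2 : ℝ) • eVec d B ∈ segment ℝ (eVec d A) (eVec d B) :=
    ⟨1 / 2, 1 / 2, by norm_num, by norm_num, by norm_num, rfl⟩
  refine hE.left_mem_of_mem_openSegment (subset_convexHull ℝ _ ⟨X, hX, rfl⟩)
    (subset_convexHull ℝ _ ⟨Y, hY, rfl⟩) hz ⟨1 / 2, 1 / 2, by norm_num, by norm_num, by norm_num, ?_⟩
  funext i
  have h1 := Finset.ext_iff.1 hi i
  have h2 := Finset.ext_iff.1 hu i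
  simp only [Finset.mem_inter, Finset.mem_union] at h1 h2
  by_cases hA : i ∈ A <;> by_cases hB : i ∈ B <;> by_cases hX : i ∈ X <;> by_cases hY : i ∈ Y <;>
    simp [eVec, hA, hB, hX, hY] at h1 h2 ⊢

/-- If `A ⊆ B` and `t ∈ S` lies strictly between their sizes, the average of all `e_C` with
`A ⊆ C ⊆ B` and `|C| = t` lies on the segment `[e_A, e_B]`, which is therefore not a face. -/
theorem not_isExtreme_of_between {d : ℕ} {S : Finset ℕ} {A B : Finset (Fin d)} (hAB : A ⊆ B)
    {t : ℕ} (ht : t ∈ S) (hAt : A.card < t) (htB : t < B.card) :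
    ¬ IsExtreme ℝ (Shyp d S) (segment ℝ (eVec d A) (eVec d B)) := by
  intro hE
  have hconv := hE.convex_sdiff (convex_convexHull ℝ _)
  set G : Finset (Finset (Fin d)) := (B.powersetCard t).filter (A ⊆ ·) with hG
  have hmem : ∀ C ∈ G, A ⊆ C ∧ C ⊆ B ∧ C.card = t := by
    intro C hC
    simp only [hG, Finset.mem_filter, Finset.mem_powersetCard] at hC
    exact ⟨hC.2, hC.1⟩
  have hN : 0 < G.card := by
    rw [hG, Finset.card_filter_powersetCard_subset A B t hAB hAt.le]
    exact Nat.choose_pos (by omega)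
  have hN' : (0 : ℝ) < G.card := by exact_mod_cast hN
  -- The average of the family, as a point of the complement of the segment.
  have havg : ∑ C ∈ G, (1 / (G.card : ℝ)) • eVec d C ∈
      Shyp d S \ segment ℝ (eVec d A) (eVec d B) := by
    refine hconv.sum_mem (fun _ _ => by positivity) ?_ ?_
    · rw [Finset.sum_const, nsmul_eq_mul]; field_simp
    · intro C hC
      obtain ⟨-, -, h3⟩ := hmem C hC
      refine ⟨subset_convexHull ℝ _ ⟨C, h3 ▸ ht, rfl⟩, fun h => ?_⟩
      rcases eVec_mem_segment h with rfl | rfl <;> omega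
  apply havg.2
  have hval : ∀ i, (∑ C ∈ G, (1 / (G.card : ℝ)) • eVec d C) i =
      ((G.filter (i ∈ ·)).card : ℝ) / G.card := by
    intro i
    rw [Finset.sum_apply]
    simp only [Pi.smul_apply, eVec, smul_eq_mul]
    rw [← Finset.mul_sum, Finset.sum_boole]
    ring
  set K := (B.card - (A.card + 1)).choose (t - (A.card + 1)) with hK
  have hcount : ∀ i ∈ B, i ∉ A → (G.filter (i ∈ ·)).card = K := by
    intro i hiB hiA
    have : G.filter (i ∈ ·) = (B.powersetCard t).filter (insert i A ⊆ ·) := by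
      ext C
      simp only [hG, Finset.mem_filter, Finset.insert_subset_iff]
      tauto
    rw [this, Finset.card_filter_powersetCard_subset _ B t (Finset.insert_subset hiB hAB)
      (by rw [Finset.card_insert_of_notMem hiA]; omega), Finset.card_insert_of_notMem hiA]
  obtain ⟨j, hjB, hjA⟩ : ∃ j ∈ B, j ∉ A := by
    by_contra! h
    have := Finset.card_le_card h
    omega
  have hKN : (K : ℝ) ≤ G.card := by
    rw [← hcount j hjB hjA]
    exact_mod_cast Finset.card_filter_le _ _
  refine ⟨1 - K / G.card, K / G.card, ?_, by positivity, by ring, ?_⟩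
  · rw [sub_nonneg, div_le_one hN']; exact hKN
  funext i
  rw [hval]
  by_cases hiA : i ∈ A
  · have : G.filter (i ∈ ·) = G := Finset.filter_true_of_mem fun C hC => (hmem C hC).1 hiA
    rw [this, div_self hN'.ne']
    simp [eVec, hiA, hAB hiA]
  by_cases hiB : i ∈ B
  · rw [hcount i hiB hiA]
    simp [eVec, hiA, hiB]
  · have : G.filter (i ∈ ·) = ∅ :=
      Finset.filter_false_of_mem fun C hC h => hiB ((hmem C hC).2.1 h)
    rw [this]
    simp [eVec, hiA, hiB]

theorem isExtreme_segment_left {d : ℕ} {u v : Fin d → ℝ} (h : u ≠ v) :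
    IsExtreme ℝ (segment ℝ u v) {u} := by
  obtain ⟨i, hi⟩ := Function.ne_iff.1 h
  have hpos : 0 < (u i - v i) ^ 2 := by
    have := sub_ne_zero.2 hi
    positivity
  have key : (u i - v i) * v i < (u i - v i) * u i := by nlinarith
  have := isExtreme_convexHull_of_max (V := {u, v}) (F := {u})
    ((u i - v i) • (LinearMap.proj i : (Fin d → ℝ) →ₗ[ℝ] ℝ)) ((u i - v i) * u i)
    (by simp) (by rintro x (rfl | rfl) <;> simp; exact key.le)
    (by
      rintro x (rfl | rfl) hx
      · rfl
      · simp only [LinearMap.smul_apply, LinearMap.proj_apply, smul_eq_mul] at hx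
        linarith)
    (by rintro x rfl; simp)
  rwa [convexHull_pair, convexHull_singleton] at this

/-- Classification of the edges of `Δ(d,S)`. -/
theorem edge_iff {d : ℕ} {S : Finset ℕ} {E : Set (Fin d → ℝ)} :
    (∃ u v : Fin d → ℝ, u ≠ v ∧ E = segment ℝ u v ∧ IsExtreme ℝ (Shyp d S) E) ↔
      (∃ A B : Finset (Fin d), A ⊆ B ∧ A.card ∈ S ∧ B.card ∈ S ∧ A.card < B.card ∧
        (∀ t ∈ S, A.card < t → ¬ t < B.card) ∧ E = segment ℝ (eVec d A) (eVec d B)) ∨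
      (∃ (C : Finset (Fin d)) (a b : Fin d), a ∉ C ∧ b ∉ C ∧ a ≠ b ∧ C.card + 1 ∈ S ∧
        ¬(C.card ∈ S ∧ C.card + 2 ∈ S) ∧
        E = segment ℝ (eVec d (insert a C)) (eVec d (insert b C))) := by
  constructor
  · rintro ⟨u, v, huv, rfl, hE⟩
    have hu : u ∈ {x | ∃ A : Finset (Fin d), A.card ∈ S ∧ x = eVec d A} :=
      extremePoints_convexHull_subset
        (isExtreme_singleton.1 (hE.trans (isExtreme_segment_left huv)))
    have hv : v ∈ {x | ∃ A : Finset (Fin d), A.card ∈ S ∧ x = eVec d A} := by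
      refine extremePoints_convexHull_subset (𝕜 := ℝ) (isExtreme_singleton.1 (hE.trans ?_))
      rw [segment_symm]
      exact isExtreme_segment_left huv.symm
    obtain ⟨A, hA, rfl⟩ := hu
    obtain ⟨B, hB, rfl⟩ := hv
    have hne : A ≠ B := fun h => huv (by rw [h])
    clear huv
    wlog hle : A.card ≤ B.card generalizing A B with H
    · rw [segment_symm]
      exact H B hB A hA (by rwa [segment_symm]) hne.symm (by omega)
    by_cases hAB : A ⊆ B
    · left
      exact ⟨A, B, hAB, hA, hB, Finset.card_lt_card (hAB.ssubset_of_ne hne),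
        fun t ht h1 h2 => not_isExtreme_of_between hAB ht h1 h2 hE, rfl⟩
    right
    obtain ⟨a, haA, haB⟩ := Finset.not_subset.1 hAB
    obtain ⟨b, hbB, hbA⟩ : ∃ b ∈ B, b ∉ A := by
      by_contra! h
      exact hne (Finset.eq_of_subset_of_card_le h hle).symm
    have hab : a ≠ b := fun h => hbA (h ▸ haA)
    have hA' : insert a (A.erase a) = A := Finset.insert_erase haA
    -- Exchanging `a` and `b` preserves sizes, so `B` must be `A` with `a` replaced by `b`.
    have hB' : insert b (A.erase a) = B := by
      have hcA : (insert b (A.erase a)).card = A.card := by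
        rw [Finset.card_insert_of_notMem (by simp [hbA]), Finset.card_erase_add_one haA]
      have hcB : (insert a (B.erase b)).card = B.card := by
        rw [Finset.card_insert_of_notMem (by simp [haB]), Finset.card_erase_add_one hbB]
      rcases eq_of_exchange (X := insert b (A.erase a)) (Y := insert a (B.erase b)) hE
        (hcA ▸ hA) (hcB ▸ hB) (by ext i; grind) (by ext i; grind) with h | h
      · exact absurd (h ▸ Finset.mem_insert_self b _) hbA
      · exact h
    refine ⟨A.erase a, a, b, by simp, by simp [hbA], hab, ?_, ?_, ?_⟩
    · rwa [Finset.card_erase_add_one haA]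
    · rintro ⟨h1, h2⟩
      have hcD : (insert b A).card = (A.erase a).card + 2 := by
        rw [Finset.card_insert_of_notMem hbA, ← Finset.card_erase_add_one haA]
      rcases eq_of_exchange (X := A.erase a) (Y := insert b A) hE h1 (hcD ▸ h2)
        (by ext i; grind) (by ext i; grind) with h | h
      · exact Finset.notMem_erase a A (by rw [h]; exact haA)
      · exact hbA (Finset.mem_of_mem_erase (h ▸ hbB))
    · rw [hA', hB']
  · rintro (⟨A, B, hAB, hA, hB, hlt, hS, rfl⟩ | ⟨C, a, b, ha, hb, hab, h1, hS, rfl⟩)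
    · refine ⟨_, _, fun h => ?_, rfl, isExtreme_of_subset hAB hA hB hS⟩
      have := eVec_injective d h
      subst this
      exact lt_irrefl _ hlt
    · refine ⟨_, _, fun h => ?_, rfl, isExtreme_of_exchange ha hb hab h1 hS⟩
      have := eVec_injective d h ▸ Finset.mem_insert_self a C
      simp [hab, ha] at this

/-! ### Counting -/

/-- The pairs `C ⊆ D` of subsets of `[d]` with `|C| = p` and `|D| = q`. -/
def flagPairs (d p q : ℕ) : Finset (Σ _ : Finset (Fin d), Finset (Fin d)) :=
  (Finset.powersetCard p Finset.univ).sigma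
    fun C => (Finset.powersetCard q Finset.univ).filter (C ⊆ ·)

theorem mem_flagPairs {d p q : ℕ} {x : Σ _ : Finset (Fin d), Finset (Fin d)} :
    x ∈ flagPairs d p q ↔ x.1 ⊆ x.2 ∧ x.1.card = p ∧ x.2.card = q := by
  simp [flagPairs]
  tauto

theorem card_flagPairs (d : ℕ) {p q : ℕ} (hpq : p ≤ q) :
    (flagPairs d p q).card = (d - p).choose (q - p) * d.choose p := by
  rw [flagPairs, Finset.card_sigma, Finset.sum_congr rfl (g := fun _ => (d - p).choose (q - p))]
  · simp [mul_comm]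
  · intro C hC
    rw [Finset.mem_powersetCard] at hC
    rw [Finset.card_filter_powersetCard_subset C _ q (Finset.subset_univ C) (by omega), hC.2]
    simp

/-- The pairs `C ⊆ D` with `|C| = t - 1` and `|D| = t + 1`; there are none when `t = 0`. -/
def squarePairs (d t : ℕ) : Finset (Σ _ : Finset (Fin d), Finset (Fin d)) :=
  if t = 0 then ∅ else flagPairs d (t - 1) (t + 1)

theorem mem_squarePairs {d t : ℕ} {x : Σ _ : Finset (Fin d), Finset (Fin d)} :
    x ∈ squarePairs d t ↔ x.1 ⊆ x.2 ∧ x.1.card + 1 = t ∧ x.2.card = x.1.card + 2 := by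
  unfold squarePairs
  split_ifs with h
  · simp [h]
  · rw [mem_flagPairs]
    constructor <;> rintro ⟨h1, h2, h3⟩ <;> refine ⟨h1, ?_, ?_⟩ <;> omega

theorem card_squarePairs (d t : ℕ) :
    (squarePairs d t).card = t * (d - t) * d.choose t / 2 := by
  unfold squarePairs
  split_ifs with h
  · simp [h]
  · obtain ⟨t, rfl⟩ := Nat.exists_eq_succ_of_ne_zero h
    rw [card_flagPairs d (by omega)]
    simp only [Nat.succ_eq_add_one, Nat.add_sub_cancel]
    have e : t + 1 + 1 - t = 2 := by omega
    rw [e]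
    symm
    apply Nat.div_eq_of_eq_mul_left two_pos
    have h1 : (d - t).choose 2 * 2 = (d - t) * (d - (t + 1)) := by
      have := Nat.choose_succ_right_eq (d - t) 1
      simpa [Nat.sub_sub] using this
    have h2 := Nat.choose_succ_right_eq d t
    calc (t + 1) * (d - (t + 1)) * d.choose (t + 1)
        = (d.choose (t + 1) * (t + 1)) * (d - (t + 1)) := by ring
      _ = d.choose t * ((d - t) * (d - (t + 1))) := by rw [h2]; ring
      _ = _ := by rw [← h1]; ring

theorem exists_insert_insert {d : ℕ} {C D : Finset (Fin d)} (h : C ⊆ D)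
    (hc : D.card = C.card + 2) :
    ∃ a b, a ∉ C ∧ b ∉ C ∧ a ≠ b ∧ D = insert a (insert b C) := by
  have h2 : (D \ C).card = 2 := by rw [Finset.card_sdiff_of_subset h]; omega
  obtain ⟨a, b, hab, he⟩ := Finset.card_eq_two.1 h2
  have ha : a ∈ D \ C := by simp [he]
  have hb : b ∈ D \ C := by simp [he]
  rw [Finset.mem_sdiff] at ha hb
  refine ⟨a, b, ha.2, hb.2, hab, ?_⟩
  rw [← Finset.sdiff_union_of_subset h, he]
  ext i
  simp

/-- A pair of vertices is determined by the segment it spans. -/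
theorem convexHull_pair_injective {d : ℕ} {P Q : Finset (Finset (Fin d))}
    (hP : ∃ A B, P = {A, B}) (hQ : ∃ A B, Q = {A, B})
    (h : convexHull ℝ (eVec d '' P) = convexHull ℝ (eVec d '' Q)) : P = Q := by
  have key : ∀ R : Finset (Finset (Fin d)), (∃ A B, R = {A, B}) → ∀ X,
      X ∈ R ↔ eVec d X ∈ convexHull ℝ (eVec d '' R) := by
    rintro R ⟨A, B, rfl⟩ X
    constructor
    · intro hX
      exact subset_convexHull ℝ _ ⟨X, by exact_mod_cast hX, rfl⟩
    · intro hX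
      rw [Finset.coe_pair, convexHull_eVec_pair] at hX
      simpa using eVec_mem_segment hX
  ext X
  rw [key P hP, key Q hQ, h]

/-- the number of edges of `Δ(d,S)` for `S = {s 0 < s 1 < ⋯ < s (k-1)}`. -/
theorem card_edges_Shyp (d k : ℕ) (hd : 1 ≤ d) (hk : 1 ≤ k) (s : ℕ → ℕ)
    (hmono : ∀ i, i + 1 < k → s i < s (i + 1)) (hsd : ∀ i, i < k → s i ≤ d) :
    {E : Set (Fin d → ℝ) | ∃ u v : Fin d → ℝ, u ≠ v ∧ E = segment ℝ u v ∧
        IsExtreme ℝ (Shyp d ((Finset.range k).image s)) E}.ncard =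
      (∑ i ∈ Finset.range (k - 1), (d - s i).choose (s (i + 1) - s i) * d.choose (s i)) +
      ∑ j ∈ (Finset.range k).filter
          (fun j => ¬(s j - 1 ∈ (Finset.range k).image s ∧
                      s j + 1 ∈ (Finset.range k).image s)),
        s j * (d - s j) * d.choose (s j) / 2 := by
  have hlt : ∀ i j, i < j → j < k → s i < s j := by
    intro i j hij
    induction j, hij using Nat.le_induction with
    | base => exact hmono i
    | succ j _ ih => exact fun hj => (ih (by omega)).trans (hmono j hj)
  have hlt_iff : ∀ i j, i < k → j < k → s i < s j → i < j := by
    intro i j hi hj h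
    by_contra! hji
    rcases hji.lt_or_eq with h' | rfl
    · exact absurd (hlt j i h' hi) (by omega)
    · exact lt_irrefl _ h
  have hinj : ∀ i j, i < k → j < k → s i = s j → i = j := by
    intro i j hi hj h
    rcases lt_trichotomy i j with h' | h' | h'
    · exact absurd (hlt i j h' hj) (by omega)
    · exact h'
    · exact absurd (hlt j i h' hi) (by omega)
  set S := (Finset.range k).image s with hS
  have hSmem : ∀ t, t ∈ S ↔ ∃ i < k, s i = t := by simp [hS]
  set J := (Finset.range k).filter (fun j => ¬(s j - 1 ∈ S ∧ s j + 1 ∈ S)) with hJ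
  -- Edges of the first kind come from nested pairs, edges of the second kind from squares.
  let T₁ := (Finset.range (k - 1)).biUnion fun i => flagPairs d (s i) (s (i + 1))
  let T₂ := J.biUnion fun j => squarePairs d (s j)
  let φ : (Σ _ : Finset (Fin d), Finset (Fin d)) → Finset (Finset (Fin d)) := fun x => {x.1, x.2}
  let ψ : (Σ _ : Finset (Fin d), Finset (Fin d)) → Finset (Finset (Fin d)) :=
    fun x => Finset.Ioo x.1 x.2
  have hT₁ : ∀ x ∈ T₁, x.1 ⊆ x.2 ∧ x.1.card < x.2.card := by
    intro x hx
    simp only [T₁, Finset.mem_biUnion, Finset.mem_range, mem_flagPairs] at hx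
    obtain ⟨i, hi, h1, h2, h3⟩ := hx
    exact ⟨h1, by rw [h2, h3]; exact hmono i (by omega)⟩
  have hT₂ : ∀ x ∈ T₂, ∃ a b, a ∉ x.1 ∧ b ∉ x.1 ∧ a ≠ b ∧ x.2 = insert a (insert b x.1) ∧
      ψ x = {insert a x.1, insert b x.1} := by
    intro x hx
    simp only [T₂, Finset.mem_biUnion, mem_squarePairs] at hx
    obtain ⟨j, -, h1, -, h3⟩ := hx
    obtain ⟨a, b, ha, hb, hab, h⟩ := exists_insert_insert h1 h3
    exact ⟨a, b, ha, hb, hab, h, by simp only [ψ]; rw [h, Ioo_eq_pair ha hb hab]⟩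
  have hφ : InjOn φ T₁ := by
    -- The pair is recovered from its meet and join.
    have hinv : ∀ x ∈ T₁, (⟨(φ x).inf id, (φ x).sup id⟩ : Σ _ : Finset (Fin d), Finset (Fin d))
        = x := by
      rintro ⟨A, B⟩ hx
      have h := (hT₁ _ hx).1
      simp only at h
      simp [φ, h]
    intro x hx y hy hxy
    rw [← hinv x hx, ← hinv y hy, hxy]
  have hψ : InjOn ψ T₂ := by
    have hinv : ∀ x ∈ T₂, (⟨(ψ x).inf id, (ψ x).sup id⟩ : Σ _ : Finset (Fin d), Finset (Fin d))
        = x := by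
      rintro ⟨C, D⟩ hx
      obtain ⟨a, b, ha, hb, hab, h, hp⟩ := hT₂ _ hx
      rw [hp]
      simp only at h ha hb
      subst h
      have h1 : insert a C ∩ insert b C = C := by ext i; grind
      have h2 : insert a C ∪ insert b C = insert a (insert b C) := by ext i; grind
      simp [h1, h2]
    intro x hx y hy hxy
    rw [← hinv x hx, ← hinv y hy, hxy]
  have hdisj : Disjoint (T₁.image φ) (T₂.image ψ) := by
    rw [Finset.disjoint_left]
    intro P hP hP'
    obtain ⟨x, hx, rfl⟩ := Finset.mem_image.1 hP
    obtain ⟨y, hy, hxy⟩ := Finset.mem_image.1 hP'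
    obtain ⟨a, b, ha, hb, hab, h, hp⟩ := hT₂ _ hy
    have hcard : ∀ X ∈ ψ y, X.card = y.1.card + 1 := by
      intro X hX
      rw [hp, Finset.mem_insert, Finset.mem_singleton] at hX
      rcases hX with rfl | rfl
      · exact Finset.card_insert_of_notMem ha
      · exact Finset.card_insert_of_notMem hb
    have h1 := hcard x.1 (by rw [hxy]; simp [φ])
    have h2 := hcard x.2 (by rw [hxy]; simp [φ])
    have := (hT₁ x hx).2
    omega
  have hpair : ∀ P ∈ T₁.image φ ∪ T₂.image ψ, ∃ A B, P = {A, B} := by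
    intro P hP
    rcases Finset.mem_union.1 hP with hP | hP <;> obtain ⟨x, hx, rfl⟩ := Finset.mem_image.1 hP
    · exact ⟨_, _, rfl⟩
    · obtain ⟨a, b, -, -, -, -, hp⟩ := hT₂ _ hx
      exact ⟨_, _, hp⟩
  have hset : {E : Set (Fin d → ℝ) | ∃ u v : Fin d → ℝ, u ≠ v ∧ E = segment ℝ u v ∧
      IsExtreme ℝ (Shyp d S) E} =
      (fun P : Finset (Finset (Fin d)) => convexHull ℝ (eVec d '' (P : Set (Finset (Fin d))))) ''
        ((T₁.image φ ∪ T₂.image ψ : Finset (Finset (Finset (Fin d)))) :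
          Set (Finset (Finset (Fin d)))) := by
    ext E
    rw [mem_ofPred_eq, edge_iff]
    constructor
    · rintro (⟨A, B, hAB, hA, hB, hc, hbt, rfl⟩ | ⟨C, a, b, ha, hb, hab, h1, hg, rfl⟩)
      · refine ⟨{A, B}, ?_, ?_⟩
        · obtain ⟨i, hi, hiA⟩ := (hSmem _).1 hA
          obtain ⟨j, hj, hjB⟩ := (hSmem _).1 hB
          have hij : i < j := hlt_iff i j hi hj (by omega)
          -- No size of `S` lies strictly between, so the indices are consecutive.
          have hji : j = i + 1 := by
            by_contra hne
            exact hbt (s (i + 1)) ((hSmem _).2 ⟨i + 1, by omega, rfl⟩)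
              (hiA ▸ hlt i (i + 1) (by omega) (by omega))
              (hjB ▸ hlt (i + 1) j (by omega) hj)
          subst hji
          apply Finset.mem_coe.2
          apply Finset.mem_union_left
          refine Finset.mem_image.2 ⟨⟨A, B⟩, ?_, rfl⟩
          simp only [T₁, Finset.mem_biUnion, Finset.mem_range, mem_flagPairs]
          exact ⟨i, by omega, hAB, hiA.symm, hjB.symm⟩
        · simp only [Finset.coe_pair]
          exact convexHull_eVec_pair A B
      · refine ⟨{insert a C, insert b C}, ?_, ?_⟩
        · obtain ⟨j, hj, hjC⟩ := (hSmem _).1 h1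
          apply Finset.mem_coe.2
          apply Finset.mem_union_right
          refine Finset.mem_image.2 ⟨⟨C, insert a (insert b C)⟩, ?_, Ioo_eq_pair ha hb hab⟩
          simp only [T₂, Finset.mem_biUnion, mem_squarePairs, hJ, Finset.mem_filter,
            Finset.mem_range]
          refine ⟨j, ⟨hj, ?_⟩, fun i hi => by simp [hi], hjC.symm, ?_⟩
          · rw [hjC]; exact hg
          · rw [Finset.card_insert_of_notMem (by simp [hab, ha]), Finset.card_insert_of_notMem hb]
        · simp only [Finset.coe_pair]
          exact convexHull_eVec_pair _ _
    · rintro ⟨P, hP, rfl⟩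
      rcases Finset.mem_union.1 (Finset.mem_coe.1 hP) with hP | hP <;>
        obtain ⟨x, hx, rfl⟩ := Finset.mem_image.1 hP
      · left
        obtain ⟨h1, h2⟩ := hT₁ x hx
        simp only [T₁, Finset.mem_biUnion, Finset.mem_range, mem_flagPairs] at hx
        obtain ⟨i, hi, -, h3, h4⟩ := hx
        refine ⟨x.1, x.2, h1, (hSmem _).2 ⟨i, by omega, h3.symm⟩,
          (hSmem _).2 ⟨i + 1, by omega, h4.symm⟩, h2, ?_, ?_⟩
        · intro t ht hlo hhi
          obtain ⟨m, hm, rfl⟩ := (hSmem _).1 ht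
          have := hlt_iff i m (by omega) hm (by omega)
          have := hlt_iff m (i + 1) hm (by omega) (by omega)
          omega
        · simp only [φ, Finset.coe_pair]
          exact convexHull_eVec_pair _ _
      · right
        obtain ⟨a, b, ha, hb, hab, h, hp⟩ := hT₂ _ hx
        simp only [T₂, Finset.mem_biUnion, mem_squarePairs, hJ, Finset.mem_filter,
          Finset.mem_range] at hx
        obtain ⟨j, ⟨hj, hg⟩, -, h3, -⟩ := hx
        refine ⟨x.1, a, b, ha, hb, hab, (hSmem _).2 ⟨j, hj, h3.symm⟩, ?_, ?_⟩
        · rw [← h3] at hg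
          exact hg
        · simp only [hp, Finset.coe_pair]
          exact convexHull_eVec_pair _ _
  rw [hset, InjOn.ncard_image, ncard_coe_finset, Finset.card_union_of_disjoint hdisj,
    Finset.card_image_of_injOn hφ, Finset.card_image_of_injOn hψ]
  · congr 1
    · rw [Finset.card_biUnion]
      · refine Finset.sum_congr rfl fun i hi => ?_
        rw [Finset.mem_range] at hi
        exact card_flagPairs d (hmono i (by omega)).le
      · intro i hi j hj hij
        rw [Finset.mem_coe, Finset.mem_range] at hi hj
        rw [Function.onFun, Finset.disjoint_left]
        intro x hxi hxj
        rw [mem_flagPairs] at hxi hxj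
        exact hij (hinj i j (by omega) (by omega) (by omega))
    · rw [Finset.card_biUnion]
      · exact Finset.sum_congr rfl fun j _ => card_squarePairs d (s j)
      · intro i hi j hj hij
        simp only [hJ, Finset.mem_coe, Finset.mem_filter, Finset.mem_range] at hi hj
        rw [Function.onFun, Finset.disjoint_left]
        intro x hxi hxj
        rw [mem_squarePairs] at hxi hxj
        exact hij (hinj i j hi.1 hj.1 (by omega))
  · intro P hP Q hQ h
    exact convexHull_pair_injective (hpair P hP) (hpair Q hQ) h
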